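/- Let f = a·z_1³ + b·z_2³ + c·z_3³ + 6d·z_1z_2z_3 ∈ ℂ[z_1,z_2,z_3] with Δ(f) ≠ 0 and I4(f) ≠ 0, let μ_I be scalars with z^I − μ_I·H(f) ∈ J(f), let A_f be the associated cubic, and set g := Δ(f)·A_f (which is again of the form a'·z_1³ + b'·z_2³ + c'·z_3³ + 6d'·z_1z_2z_3). Then Δ(g) ≠ 0, and for any scalars ν_I with z^I − ν_I·H(g) ∈ J(g) and associated cubic A_g := Σ_{|I|=3} (6/(i_1!i_2!i_3!))·ν_I·z^I, one has Δ(g)·A_g = −(I4(f)²·Δ(f)⁶/(2²¹·3³⁰))·f. In particular, the map f ↦ A_f is an involution up to scale on nondegenerate ternary cubics of this form with I4 ≠ 0. -/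

import Mathlib

/-!
Write `p = abc` and `q = abc + 8d³`, so that `Δ(f) = p q³` and `I4(f) = d (p - d³)`.
In degree three, `J(f)` lies in the kernel of an explicit linear functional `apolar`, which sends
`z₁z₂z₃` to `abc`, the cubes `z₁³, z₂³, z₃³` to `-2bcd, -2acd, -2abd`, every other cubic monomial
to `0`, and `H(f)` to `216 p q`. When `Δ(f) ≠ 0` the last value is nonzero, so applying the
functional to `z^I - μ_I H(f) ∈ J(f)` determines every `μ_I`; this gives (`disc_mul_assoc`)
`Δ(f) A_f = cubic (-2bcd q²/216) (-2acd q²/216) (-2abd q²/216) (p q²/216)`.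
This formula is again of the same shape, so the theorem follows by applying it twice: for
`g = Δ(f) A_f` one finds `p_g = -8 d³ p² q⁶ / 216³` and `q_g = 8 p² q⁶ (p - d³) / 216³`, both
nonzero because `Δ(f) ≠ 0` and `I4(f) ≠ 0`, and the rest is a polynomial identity.
-/

open MvPolynomial

noncomputable section

/-- Ternary forms: polynomials in three variables over ℂ. -/
abbrev P3 := MvPolynomial (Fin 3) ℂ

/-- The Hessian determinant of a ternary form. -/
def hess3 (f : P3) : P3 := (Matrix.of fun i j => pderiv i (pderiv j f)).det

/-- The Jacobian ideal `J(f) = (f_1, f_2, f_3)`. -/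
def jac3 (f : P3) : Ideal P3 := Ideal.span {pderiv 0 f, pderiv 1 f, pderiv 2 f}

/-- The ternary cubic `a·z_1³ + b·z_2³ + c·z_3³ + 6d·z_1z_2z_3`. -/
def cubic (a b c d : ℂ) : P3 :=
  MvPolynomial.C a * X 0 ^ 3 + MvPolynomial.C b * X 1 ^ 3 + MvPolynomial.C c * X 2 ^ 3 +
    MvPolynomial.C (6 * d) * X 0 * X 1 * X 2

/-- Coefficient `a` of `z_1³` in a cubic of the above form. -/
def ca (f : P3) : ℂ := coeff (Finsupp.single 0 3) f
/-- Coefficient `b` of `z_2³`. -/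
def cb (f : P3) : ℂ := coeff (Finsupp.single 1 3) f
/-- Coefficient `c` of `z_3³`. -/
def cc (f : P3) : ℂ := coeff (Finsupp.single 2 3) f
/-- Coefficient `d`, i.e. one sixth of the coefficient of `z_1z_2z_3`. -/
def cd (f : P3) : ℂ :=
  coeff (Finsupp.single 0 1 + Finsupp.single 1 1 + Finsupp.single 2 1) f / 6

/-- The Aronhold invariant `I4(f) = abcd − d⁴` of `a·z_1³ + b·z_2³ + c·z_3³ + 6d·z_1z_2z_3`. -/
def I4 (f : P3) : ℂ := ca f * cb f * cc f * cd f - cd f ^ 4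

/-- The Aronhold invariant `I6(f) = a²b²c² − 20abcd³ − 8d⁶`. -/
def I6 (f : P3) : ℂ :=
  ca f ^ 2 * cb f ^ 2 * cc f ^ 2 - 20 * ca f * cb f * cc f * cd f ^ 3 - 8 * cd f ^ 6

/-- The discriminant `Δ(f) = I6(f)² + 64·I4(f)³`. -/
def disc3 (f : P3) : ℂ := I6 f ^ 2 + 64 * I4 f ^ 3

/-- The associated cubic `A_f := Σ_{|I|=3} (6/(i_1!i_2!i_3!))·μ_I·z^I`
built from scalars `μ_I`. -/
def assocCubic (μ : (Fin 3 → ℕ) → ℂ) : P3 :=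
  ∑ I ∈ Finset.Nat.antidiagonalTuple 3 3,
    MvPolynomial.C ((6 : ℂ) / ∏ i, ((I i).factorial : ℂ)) * MvPolynomial.C (μ I) *
      ∏ i, X i ^ I i

lemma cubic_eq_monomial (a b c d : ℂ) : cubic a b c d =
    monomial (Finsupp.single 0 3) a + monomial (Finsupp.single 1 3) b +
      monomial (Finsupp.single 2 3) c +
      monomial (Finsupp.single 0 1 + Finsupp.single 1 1 + Finsupp.single 2 1) (6 * d) := by
  simp only [cubic, X, C_mul_monomial, monomial_pow, monomial_mul]
  simp

lemma ca_cubic (a b c d : ℂ) : ca (cubic a b c d) = a := by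
  simp [ca, cubic_eq_monomial, coeff_monomial, Finsupp.ext_iff, Fin.forall_fin_succ,
    Finsupp.single_apply]

lemma cb_cubic (a b c d : ℂ) : cb (cubic a b c d) = b := by
  simp [cb, cubic_eq_monomial, coeff_monomial, Finsupp.ext_iff, Fin.forall_fin_succ,
    Finsupp.single_apply]

lemma cc_cubic (a b c d : ℂ) : cc (cubic a b c d) = c := by
  simp [cc, cubic_eq_monomial, coeff_monomial, Finsupp.ext_iff, Fin.forall_fin_succ,
    Finsupp.single_apply]

lemma cd_cubic (a b c d : ℂ) : cd (cubic a b c d) = d := by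
  simp [cd, cubic_eq_monomial, coeff_monomial, Finsupp.ext_iff, Fin.forall_fin_succ,
    Finsupp.single_apply]

lemma I4_cubic (a b c d : ℂ) : I4 (cubic a b c d) = d * (a * b * c - d ^ 3) := by
  simp only [I4, ca_cubic, cb_cubic, cc_cubic, cd_cubic]; ring

lemma disc3_cubic (a b c d : ℂ) :
    disc3 (cubic a b c d) = a * b * c * (a * b * c + 8 * d ^ 3) ^ 3 := by
  simp only [disc3, I4, I6, ca_cubic, cb_cubic, cc_cubic, cd_cubic]; ring

/-- The functional `h ↦ abc·[z₁z₂z₃]h - 2d(bc·[z₁³]h + ac·[z₂³]h + ab·[z₃³]h)`, whose kernel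
contains the Jacobian ideal of `cubic a b c d`. Coefficients are encoded as derivatives at the
origin, which turns the `6` in `∂ᵢ³ zᵢ³ = 6` into the factor `d / 3`. -/
def apolar (a b c d : ℂ) (h : P3) : ℂ :=
  a * b * c * eval 0 (pderiv 0 (pderiv 1 (pderiv 2 h)))
    - d / 3 * (b * c * eval 0 (pderiv 0 (pderiv 0 (pderiv 0 h)))
      + a * c * eval 0 (pderiv 1 (pderiv 1 (pderiv 1 h)))
      + a * b * eval 0 (pderiv 2 (pderiv 2 (pderiv 2 h))))

lemma apolar_sub_C_mul (a b c d m : ℂ) (h k : P3) :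
    apolar a b c d (h - C m * k) = apolar a b c d h - m * apolar a b c d k := by
  simp only [apolar, map_sub, pderiv_C_mul, map_mul, eval_C]; ring

lemma C_num : (C 2 : P3) = 2 ∧ (C 3 : P3) = 3 ∧ (C 6 : P3) = 6 ∧ (C 36 : P3) = 36 ∧
    (C 216 : P3) = 216 :=
  ⟨map_ofNat C 2, map_ofNat C 3, map_ofNat C 6, map_ofNat C 36, map_ofNat C 216⟩

lemma constantCoeff_two : constantCoeff (2 : P3) = (2 : ℂ) :=
  map_ofNat constantCoeff 2

lemma pderiv_two (i : Fin 3) : pderiv i (2 : P3) = 0 := by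
  rw [← C_num.1, pderiv_C]

lemma pderiv_cubic_zero (a b c d : ℂ) :
    pderiv 0 (cubic a b c d) = C (3 * a) * X 0 ^ 2 + C (6 * d) * X 1 * X 2 := by
  simp [cubic, pderiv_X]
  simp only [C_num]
  ring

lemma pderiv_cubic_one (a b c d : ℂ) :
    pderiv 1 (cubic a b c d) = C (3 * b) * X 1 ^ 2 + C (6 * d) * X 0 * X 2 := by
  simp [cubic, pderiv_X]
  simp only [C_num]
  ring

lemma pderiv_cubic_two (a b c d : ℂ) :
    pderiv 2 (cubic a b c d) = C (3 * c) * X 2 ^ 2 + C (6 * d) * X 0 * X 1 := by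
  simp [cubic, pderiv_X]
  simp only [C_num]
  ring

/-- `apolar` kills `r f₁ + s f₂ + t f₃` for arbitrary `r, s, t`: by the Leibniz rule only first
derivatives of `r, s, t` at the origin contribute, and their coefficients cancel. -/
lemma apolar_eq_zero (a b c d : ℂ) (h : P3) (hh : h ∈ jac3 (cubic a b c d)) :
    apolar a b c d h = 0 := by
  rw [jac3, Ideal.span, Submodule.mem_span_triple] at hh
  obtain ⟨r, s, t, rfl⟩ := hh
  simp [pderiv_cubic_zero, pderiv_cubic_one, pderiv_cubic_two, apolar, pderiv_X,
    Derivation.leibniz, constantCoeff_two, pderiv_two]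
  ring

lemma hess3_cubic (a b c d : ℂ) : hess3 (cubic a b c d) =
    cubic (-216 * a * d ^ 2) (-216 * b * d ^ 2) (-216 * c * d ^ 2)
      (36 * (a * b * c + 2 * d ^ 3)) := by
  simp [hess3, Matrix.det_fin_three, pderiv_cubic_zero, pderiv_cubic_one, pderiv_cubic_two,
    pderiv_X]
  simp [cubic, C_num]
  ring

lemma apolar_cubic (a b c d a' b' c' d' : ℂ) : apolar a b c d (cubic a' b' c' d') =
    6 * (a * b * c * d') - 2 * d * (b * c * a' + a * c * b' + a * b * c') := by
  simp [apolar, pderiv_cubic_zero, pderiv_cubic_one, pderiv_cubic_two, pderiv_X,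
    constantCoeff_two]
  ring

lemma antidiagonalTuple_three_three : Finset.Nat.antidiagonalTuple 3 3 =
    {![3, 0, 0], ![0, 3, 0], ![0, 0, 3], ![1, 1, 1], ![2, 1, 0], ![2, 0, 1], ![1, 2, 0],
      ![0, 2, 1], ![1, 0, 2], ![0, 1, 2]} := by
  decide

/-- The scalars `μ_I` are forced by applying `apolar` to `z^I - μ_I H`: it takes the value
`216 abc (abc + 8d³) ≠ 0` on the Hessian and vanishes on the Jacobian ideal. -/
lemma disc_mul_assoc (a b c d : ℂ) (hΔ : disc3 (cubic a b c d) ≠ 0) (μ : (Fin 3 → ℕ) → ℂ)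
    (hμ : ∀ I : Fin 3 → ℕ, (∑ i, I i) = 3 →
      (∏ i, X i ^ I i) - C (μ I) * hess3 (cubic a b c d) ∈ jac3 (cubic a b c d)) :
    C (disc3 (cubic a b c d)) * assocCubic μ =
      cubic (-2 * b * c * d * (a * b * c + 8 * d ^ 3) ^ 2 / 216)
        (-2 * a * c * d * (a * b * c + 8 * d ^ 3) ^ 2 / 216)
        (-2 * a * b * d * (a * b * c + 8 * d ^ 3) ^ 2 / 216)
        (a * b * c * (a * b * c + 8 * d ^ 3) ^ 2 / 216) := by
  rw [disc3_cubic] at hΔ ⊢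
  have hp : a * b * c ≠ 0 := left_ne_zero_of_mul hΔ
  have hq : a * b * c + 8 * d ^ 3 ≠ 0 := fun h => hΔ (by rw [h]; ring)
  have key : ∀ I : Fin 3 → ℕ, (∑ i, I i) = 3 →
      a * b * c * (a * b * c + 8 * d ^ 3) * μ I = apolar a b c d (∏ i, X i ^ I i) / 216 := by
    intro I hI
    have h := apolar_eq_zero a b c d _ (hμ I hI)
    rw [apolar_sub_C_mul, hess3_cubic, apolar_cubic] at h
    linear_combination -h / 216
  have mixed : ∀ I : Fin 3 → ℕ, (∑ i, I i) = 3 → apolar a b c d (∏ i, X i ^ I i) = 0 →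
      μ I = 0 := by
    intro I hI h0
    have h := key I hI
    rw [h0, zero_div] at h
    exact (mul_eq_zero.mp h).resolve_left (mul_ne_zero hp hq)
  have h1 := mixed ![2, 1, 0] rfl (by
    simp [apolar, Fin.prod_univ_three, pderiv_X, Derivation.leibniz])
  have h2 := mixed ![2, 0, 1] rfl (by
    simp [apolar, Fin.prod_univ_three, pderiv_X, Derivation.leibniz])
  have h3 := mixed ![1, 2, 0] rfl (by
    simp [apolar, Fin.prod_univ_three, pderiv_X, Derivation.leibniz])
  have h4 := mixed ![0, 2, 1] rfl (by
    simp [apolar, Fin.prod_univ_three, pderiv_X, Derivation.leibniz])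
  have h5 := mixed ![1, 0, 2] rfl (by
    simp [apolar, Fin.prod_univ_three, pderiv_X, Derivation.leibniz])
  have h6 := mixed ![0, 1, 2] rfl (by
    simp [apolar, Fin.prod_univ_three, pderiv_X, Derivation.leibniz])
  have k1 := key ![3, 0, 0] rfl
  have k2 := key ![0, 3, 0] rfl
  have k3 := key ![0, 0, 3] rfl
  have k4 := key ![1, 1, 1] rfl
  have e1 : (∏ i, X i ^ (![3, 0, 0] : Fin 3 → ℕ) i : P3) = cubic 1 0 0 0 := by
    simp [Fin.prod_univ_three, cubic]
  have e2 : (∏ i, X i ^ (![0, 3, 0] : Fin 3 → ℕ) i : P3) = cubic 0 1 0 0 := by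
    simp [Fin.prod_univ_three, cubic]
  have e3 : (∏ i, X i ^ (![0, 0, 3] : Fin 3 → ℕ) i : P3) = cubic 0 0 1 0 := by
    simp [Fin.prod_univ_three, cubic]
  have e4 : (∏ i, X i ^ (![1, 1, 1] : Fin 3 → ℕ) i : P3) = cubic 0 0 0 (1 / 6) := by
    simp [Fin.prod_univ_three, cubic]
  rw [e1, apolar_cubic] at k1
  rw [e2, apolar_cubic] at k2
  rw [e3, apolar_cubic] at k3
  rw [e4, apolar_cubic] at k4
  have hA : assocCubic μ =
      cubic (μ ![3, 0, 0]) (μ ![0, 3, 0]) (μ ![0, 0, 3]) (μ ![1, 1, 1]) := by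
    rw [assocCubic, antidiagonalTuple_three_three]
    repeat rw [Finset.sum_insert (by decide)]
    rw [Finset.sum_singleton]
    simp [h1, h2, h3, h4, h5, h6, Fin.prod_univ_three, cubic, Nat.factorial]
    ring
  have hC : ∀ k x y z w : ℂ, C k * cubic x y z w = cubic (k * x) (k * y) (k * z) (k * w) := by
    intro k x y z w
    simp only [cubic, map_mul]; ring
  rw [hA, hC]
  congr 1
  · linear_combination (a * b * c + 8 * d ^ 3) ^ 2 * k1
  · linear_combination (a * b * c + 8 * d ^ 3) ^ 2 * k2
  · linear_combination (a * b * c + 8 * d ^ 3) ^ 2 * k3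
  · linear_combination (a * b * c + 8 * d ^ 3) ^ 2 * k4

/-- the associated form construction is an involution up to scale on
nondegenerate ternary cubics of the form `a·z_1³ + b·z_2³ + c·z_3³ + 6d·z_1z_2z_3`
with `I4 ≠ 0`: with `g := Δ(f)·A_f`, one has `Δ(g) ≠ 0` and
`Δ(g)·A_g = −(I4(f)²·Δ(f)⁶/(2²¹·3³⁰))·f`. -/
theorem assoc_cubic_involution (a b c d : ℂ) (f : P3)
    (hf : f = cubic a b c d) (hΔ : disc3 f ≠ 0) (hI4 : I4 f ≠ 0)
    (μ : (Fin 3 → ℕ) → ℂ)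
    (hμ : ∀ I : Fin 3 → ℕ, (∑ i, I i) = 3 →
      (∏ i, X i ^ I i) - MvPolynomial.C (μ I) * hess3 f ∈ jac3 f)
    (g : P3) (hg : g = MvPolynomial.C (disc3 f) * assocCubic μ) :
    disc3 g ≠ 0 ∧
    ∀ ν : (Fin 3 → ℕ) → ℂ,
      (∀ I : Fin 3 → ℕ, (∑ i, I i) = 3 →
        (∏ i, X i ^ I i) - MvPolynomial.C (ν I) * hess3 g ∈ jac3 g) →
      MvPolynomial.C (disc3 g) * assocCubic ν =
        MvPolynomial.C (-(I4 f ^ 2 * disc3 f ^ 6 / (2 ^ 21 * 3 ^ 30))) * f := by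
  subst hf
  have hg' := hg.trans (disc_mul_assoc a b c d hΔ μ hμ)
  clear hg hμ
  subst hg'
  rw [I4_cubic] at hI4
  have hΔ' := hΔ
  rw [disc3_cubic] at hΔ'
  have hp : a * b * c ≠ 0 := left_ne_zero_of_mul hΔ'
  have hq : a * b * c + 8 * d ^ 3 ≠ 0 := fun h => hΔ' (by rw [h]; ring)
  have hd : d ≠ 0 := left_ne_zero_of_mul hI4
  have hr : a * b * c - d ^ 3 ≠ 0 := right_ne_zero_of_mul hI4
  have hΔg : disc3 (cubic (-2 * b * c * d * (a * b * c + 8 * d ^ 3) ^ 2 / 216)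
        (-2 * a * c * d * (a * b * c + 8 * d ^ 3) ^ 2 / 216)
        (-2 * a * b * d * (a * b * c + 8 * d ^ 3) ^ 2 / 216)
        (a * b * c * (a * b * c + 8 * d ^ 3) ^ 2 / 216)) ≠ 0 := by
    -- The value `p_g * q_g ^ 3` in terms of `p`, `q`, `d` and `p - d³`.
    have : disc3 (cubic (-2 * b * c * d * (a * b * c + 8 * d ^ 3) ^ 2 / 216)
        (-2 * a * c * d * (a * b * c + 8 * d ^ 3) ^ 2 / 216)
        (-2 * a * b * d * (a * b * c + 8 * d ^ 3) ^ 2 / 216)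
        (a * b * c * (a * b * c + 8 * d ^ 3) ^ 2 / 216)) =
        -(8 ^ 4 / 216 ^ 12) * (d ^ 3 * (a * b * c) ^ 8 * (a * b * c + 8 * d ^ 3) ^ 24 *
          (a * b * c - d ^ 3) ^ 3) := by
      rw [disc3_cubic]
      generalize hQ : a * b * c + 8 * d ^ 3 = q
      ring
    rw [this]
    exact mul_ne_zero (by norm_num) (mul_ne_zero (mul_ne_zero (mul_ne_zero (pow_ne_zero _ hd)
      (pow_ne_zero _ hp)) (pow_ne_zero _ hq)) (pow_ne_zero _ hr))
  refine ⟨hΔg, fun ν hν => ?_⟩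
  rw [disc_mul_assoc _ _ _ _ hΔg ν hν, I4_cubic, disc3_cubic]
  have hC : ∀ k x y z w : ℂ, C k * cubic x y z w = cubic (k * x) (k * y) (k * z) (k * w) := by
    intro k x y z w
    simp only [cubic, map_mul]; ring
  rw [hC]
  generalize a * b * c + 8 * d ^ 3 = q
  congr 1 <;> ring

end
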